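/- arXiv:math/0702077 — 2 statements merged into one kernel-verified Lean document; each statement's English description precedes it below -/
import Mathlib

section
/- The map i from symmetric matrices to 3-forms is injective: if h is a symmetric real 7×7 matrix such that Σ_l (h_{il} φ_{ljk} + h_{jl} φ_{ilk} + h_{kl} φ_{ijl}) = 0 for all i,j,k, then h = 0. -/
open Finset

noncomputable section

def phi0 : Fin 7 → Fin 7 → Fin 7 → ℝ := fun i j k =>
  if (i, j, k) = (0, 1, 2) then -1
  else if (i, j, k) = (0, 3, 4) then -1
  else if (i, j, k) = (0, 5, 6) then -1
  else if (i, j, k) = (1, 3, 5) then -1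
  else if (i, j, k) = (1, 4, 6) then 1
  else if (i, j, k) = (2, 3, 6) then 1
  else if (i, j, k) = (2, 4, 5) then 1
  else 0

/-- The standard G₂ 3-form on ℝ⁷ (paper's orientation convention), as a totally
antisymmetric array with `φ₁₂₃ = φ₁₄₅ = φ₁₆₇ = φ₂₄₆ = −1`, `φ₂₅₇ = φ₃₄₇ = φ₃₅₆ = 1`
(indices shifted to start at 0). -/
def phi (i j k : Fin 7) : ℝ :=
  ∑ σ : Equiv.Perm (Fin 3),
    ((Equiv.Perm.sign σ : ℤ) : ℝ) *
      phi0 (![i, j, k] (σ 0)) (![i, j, k] (σ 1)) (![i, j, k] (σ 2))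

def psi0 : Fin 7 → Fin 7 → Fin 7 → Fin 7 → ℝ := fun i j k l =>
  if (i, j, k, l) = (0, 1, 3, 6) then 1
  else if (i, j, k, l) = (0, 1, 4, 5) then 1
  else if (i, j, k, l) = (0, 2, 3, 5) then 1
  else if (i, j, k, l) = (0, 2, 4, 6) then -1
  else if (i, j, k, l) = (1, 2, 3, 4) then -1
  else if (i, j, k, l) = (1, 2, 5, 6) then -1
  else if (i, j, k, l) = (3, 4, 5, 6) then -1
  else 0

/-- The dual 4-form ψ = ∗φ of the standard G₂-structure, as a totally antisymmetric
array with `ψ₁₂₄₇ = ψ₁₂₅₆ = ψ₁₃₄₆ = 1`, `ψ₁₃₅₇ = ψ₂₃₄₅ = ψ₂₃₆₇ = ψ₄₅₆₇ = −1`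
(indices shifted to start at 0). -/
def psi (i j k l : Fin 7) : ℝ :=
  ∑ σ : Equiv.Perm (Fin 4),
    ((Equiv.Perm.sign σ : ℤ) : ℝ) *
      psi0 (![i, j, k, l] (σ 0)) (![i, j, k, l] (σ 1)) (![i, j, k, l] (σ 2))
        (![i, j, k, l] (σ 3))

/-- Kronecker delta. -/
def kdelta (i j : Fin 7) : ℝ := if i = j then 1 else 0

/-- The G₂ cross product on ℝ⁷: `(u × v)_k = Σ_{i,j} φ_{ijk} u_i v_j`. -/
def cross (u v : Fin 7 → ℝ) : Fin 7 → ℝ := fun k =>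
  ∑ i, ∑ j, phi i j k * u i * v j

/-- Euclidean inner product on ℝ⁷. -/
def dot (u v : Fin 7 → ℝ) : ℝ := ∑ i, u i * v i

end

/-!
Write `(u × v)ₖ = φᵢⱼₖ uᵢ vⱼ` for the cross product attached to `φ`. The Lagrange identity
`‖u × v‖² = ‖u‖²‖v‖² - ⟨u, v⟩²` determines the contraction of `i(h)` with `φ` over two indices:
in dimension `n` it is `(n - 3) h + 2 tr(h) 1`. If `i(h) = 0`, taking traces gives
`3 (n - 1) tr(h) = 0` and then `(n - 3) h = 0`, which forces `h = 0` for `n = 7`.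
-/

section CrossProduct

variable {ι R : Type*} [Fintype ι] [CommRing R]

/-- The array `i(h)`: the infinitesimal action of the matrix `h` on `φ`, a 3-form if `φ` is one. -/
def iMap (φ : ι → ι → ι → R) (h : Matrix ι ι R) (i j k : ι) : R :=
  ∑ l, (h i l * φ l j k + h j l * φ i l k + h k l * φ i j l)

/-- The contraction `Tᵢⱼₖ φₐⱼₖ` of two arrays over their last two indices, as a matrix in `i`
and `a`. -/
def contraction (T φ : ι → ι → ι → R) : Matrix ι ι R :=
  .of fun i a ↦ ∑ j, ∑ k, T i j k * φ a j k

/-- The product with structure constants `(eᵢ × eⱼ)ₖ = φ i j k` satisfies the Lagrange identity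
`‖u × v‖² = ‖u‖²‖v‖² - ⟨u, v⟩²`. It is polarised in both `u` and `v`, so that it becomes a condition
on basis vectors, with the identity matrix as the Kronecker delta. -/
def LagrangeIdentity [DecidableEq ι] (φ : ι → ι → ι → R) : Prop :=
  ∀ i j a b, ∑ k, (φ i j k * φ a b k + φ i b k * φ a j k) =
    2 * ((1 : Matrix ι ι R) i a * (1 : Matrix ι ι R) j b)
      - (1 : Matrix ι ι R) i j * (1 : Matrix ι ι R) a b
      - (1 : Matrix ι ι R) i b * (1 : Matrix ι ι R) a j

variable {φ : ι → ι → ι → R} {h : Matrix ι ι R}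

theorem contraction_iMap_eq_add (hskew : ∀ i j k, φ i k j = -φ i j k) :
    contraction (iMap φ h) φ = h * contraction φ φ +
      2 • contraction (fun i j k ↦ ∑ l, h j l * φ i l k) φ := by
  have hfirst : contraction (fun i j k ↦ ∑ l, h i l * φ l j k) φ = h * contraction φ φ := by
    ext i a
    simp only [contraction, Matrix.of_apply, Matrix.mul_apply, sum_mul, mul_sum, mul_assoc]
    rw [sum_comm_cycle]
  have hlast : contraction (fun i j k ↦ ∑ l, h k l * φ i j l) φ =
      contraction (fun i j k ↦ ∑ l, h j l * φ i l k) φ := by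
    ext i a
    simp only [contraction, Matrix.of_apply]
    rw [sum_comm]
    refine sum_congr rfl fun j _ ↦ sum_congr rfl fun k _ ↦ ?_
    simp only [hskew i k, hskew a j k, mul_neg, sum_neg_distrib, neg_mul]
  rw [two_smul, ← hfirst]
  nth_rw 2 [← hlast]
  ext i a
  simp only [contraction, iMap, Matrix.of_apply, Matrix.add_apply, sum_add_distrib, add_mul]
  abel

variable [DecidableEq ι] [NoZeroDivisors R] [CharZero R]

theorem LagrangeIdentity.contraction_of_isSymm (hφ : LagrangeIdentity φ) (hh : h.IsSymm) :
    contraction (fun i j k ↦ ∑ l, h j l * φ i l k) φ = h.trace • 1 - h := by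
  ext i a
  have hfactor : contraction (fun i j k ↦ ∑ l, h j l * φ i l k) φ i a =
      ∑ j, ∑ l, h j l * ∑ k, φ i l k * φ a j k := by
    simp only [contraction, Matrix.of_apply, sum_mul, mul_sum, mul_assoc]
    exact sum_congr rfl fun j _ ↦ sum_comm
  have hswap : ∑ j, ∑ l, h j l * ∑ k, φ i l k * φ a j k =
      ∑ j, ∑ l, h j l * ∑ k, φ i j k * φ a l k := by
    rw [sum_comm]
    simp only [hh.apply]
  refine mul_left_cancel₀ (two_ne_zero (α := R)) ?_
  calc 2 * contraction (fun i j k ↦ ∑ l, h j l * φ i l k) φ i a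
      = ∑ j, ∑ l, h j l * ∑ k, (φ i l k * φ a j k + φ i j k * φ a l k) := by
        rw [hfactor, two_mul]
        nth_rw 2 [hswap]
        simp only [sum_add_distrib, mul_add]
    _ = ∑ j, ∑ l, h j l * (2 * ((1 : Matrix ι ι R) i a * (1 : Matrix ι ι R) l j)
          - (1 : Matrix ι ι R) i l * (1 : Matrix ι ι R) a j
          - (1 : Matrix ι ι R) i j * (1 : Matrix ι ι R) a l) := by
        simp only [hφ _ _ _ _]
    _ = 2 * ((1 : Matrix ι ι R) i a * h.trace) - h a i - h i a := by
        simp [Matrix.one_apply, mul_sub, Matrix.trace, mul_sum, mul_comm]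
    _ = 2 * (h.trace • 1 - h) i a := by
        rw [hh.apply, Matrix.sub_apply, Matrix.smul_apply, smul_eq_mul]
        ring

theorem LagrangeIdentity.contraction_self (hφ : LagrangeIdentity φ) :
    contraction φ φ = ((Fintype.card ι : R) - 1) • 1 := by
  simpa [Matrix.one_apply, sub_smul] using hφ.contraction_of_isSymm Matrix.isSymm_one

theorem LagrangeIdentity.contraction_iMap (hφ : LagrangeIdentity φ)
    (hskew : ∀ i j k, φ i k j = -φ i j k) (hh : h.IsSymm) :
    contraction (iMap φ h) φ = ((Fintype.card ι : R) - 3) • h + (2 * h.trace) • 1 := by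
  rw [contraction_iMap_eq_add hskew, hφ.contraction_self, hφ.contraction_of_isSymm hh,
    mul_smul_comm, mul_one]
  module

theorem i_map_injective_general (hφ : LagrangeIdentity φ) (hskew : ∀ i j k, φ i k j = -φ i j k)
    (hone : Fintype.card ι ≠ 1) (hthree : Fintype.card ι ≠ 3) (hh : h.IsSymm)
    (hker : ∀ i j k, iMap φ h i j k = 0) : h = 0 := by
  have hcontr : ((Fintype.card ι : R) - 3) • h + (2 * h.trace) • 1 = 0 := by
    rw [← hφ.contraction_iMap hskew hh]
    ext i a
    simp [contraction, hker]
  have htrace : h.trace = 0 := by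
    have htr : 3 * ((Fintype.card ι : R) - 1) * h.trace = 0 := by
      have htrace_eq := congrArg Matrix.trace hcontr
      simp only [Matrix.trace_add, Matrix.trace_smul, Matrix.trace_one, Matrix.trace_zero,
        smul_eq_mul] at htrace_eq
      linear_combination htrace_eq
    have hcard : (Fintype.card ι : R) - 1 ≠ 0 := sub_ne_zero.mpr (by exact_mod_cast hone)
    exact (mul_eq_zero.mp htr).resolve_left (mul_ne_zero (OfNat.ofNat_ne_zero 3) hcard)
  have hsmul : ((Fintype.card ι : R) - 3) • h = 0 := by
    simpa [htrace] using hcontr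
  have hcard : (Fintype.card ι : R) - 3 ≠ 0 := sub_ne_zero.mpr (by exact_mod_cast hthree)
  exact (smul_eq_zero.mp hsmul).resolve_left hcard

end CrossProduct

theorem sum_perm_fin_three {M : Type*} [AddCommMonoid M] (f : Equiv.Perm (Fin 3) → M) :
    ∑ σ, f σ = f 1 + f (Equiv.swap 0 1) + f (Equiv.swap 0 2) + f (Equiv.swap 1 2) +
      f (Equiv.swap 0 1 * Equiv.swap 1 2) + f (Equiv.swap 1 2 * Equiv.swap 0 1) := by
  have huniv : (univ : Finset (Equiv.Perm (Fin 3))) =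
      {1, Equiv.swap 0 1, Equiv.swap 0 2, Equiv.swap 1 2,
        Equiv.swap 0 1 * Equiv.swap 1 2, Equiv.swap 1 2 * Equiv.swap 0 1} := by decide
  rw [huniv]
  repeat rw [sum_insert (by decide)]
  simp only [sum_singleton, add_assoc]

theorem phi_eq_alternating_sum (i j k : Fin 7) :
    phi i j k =
      phi0 i j k - phi0 j i k - phi0 k j i - phi0 i k j + phi0 j k i + phi0 k i j := by
  simp [phi, sum_perm_fin_three, Equiv.swap_apply_def, sub_eq_add_neg]

theorem phi_swap_right (i j k : Fin 7) : phi i k j = -phi i j k := by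
  simp only [phi_eq_alternating_sum]
  ring

theorem cross_eq_vecCons (u v : Fin 7 → ℝ) :
    cross u v = ![
      -(u 1 * v 2 - u 2 * v 1) - (u 3 * v 4 - u 4 * v 3) - (u 5 * v 6 - u 6 * v 5),
      (u 0 * v 2 - u 2 * v 0) - (u 3 * v 5 - u 5 * v 3) + (u 4 * v 6 - u 6 * v 4),
      -(u 0 * v 1 - u 1 * v 0) + (u 3 * v 6 - u 6 * v 3) + (u 4 * v 5 - u 5 * v 4),
      (u 0 * v 4 - u 4 * v 0) + (u 1 * v 5 - u 5 * v 1) - (u 2 * v 6 - u 6 * v 2),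
      -(u 0 * v 3 - u 3 * v 0) - (u 1 * v 6 - u 6 * v 1) - (u 2 * v 5 - u 5 * v 2),
      (u 0 * v 6 - u 6 * v 0) - (u 1 * v 3 - u 3 * v 1) + (u 2 * v 4 - u 4 * v 2),
      -(u 0 * v 5 - u 5 * v 0) + (u 1 * v 4 - u 4 * v 1) + (u 2 * v 3 - u 3 * v 2)] := by
  ext k
  fin_cases k <;> simp [cross, Fin.sum_univ_seven, phi_eq_alternating_sum, phi0] <;> ring

theorem dot_cross_cross_add_swap (u v u' v' : Fin 7 → ℝ) :
    dot (cross u v) (cross u' v') + dot (cross u v') (cross u' v) =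
      2 * (dot u u' * dot v v') - dot u v * dot u' v' - dot u v' * dot u' v := by
  simp only [dot, cross_eq_vecCons, Fin.sum_univ_seven, Matrix.cons_val_zero, Matrix.cons_val_one,
    Matrix.cons_val]
  ring

theorem cross_single_single (i j : Fin 7) :
    cross (Pi.single i 1) (Pi.single j 1) = phi i j := by
  ext k
  simp [cross, Pi.single_apply]

theorem dot_single_single (i j : Fin 7) :
    dot (Pi.single i 1) (Pi.single j 1) = (1 : Matrix (Fin 7) (Fin 7) ℝ) i j := by
  simp [dot, Matrix.one_apply, Pi.single_apply, eq_comm]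

theorem lagrangeIdentity_phi : LagrangeIdentity phi := by
  intro i j a b
  simp only [sum_add_distrib, ← cross_single_single, ← dot_single_single]
  exact dot_cross_cross_add_swap (Pi.single i 1) (Pi.single j 1) (Pi.single a 1) (Pi.single b 1)

/-- Corollary `imapinjectivecor`: the map i from symmetric matrices to 3-forms is
injective. -/
theorem i_map_injective (h : Fin 7 → Fin 7 → ℝ)
    (hsymm : ∀ i j, h j i = h i j)
    (hker : ∀ i j k : Fin 7,
      (∑ l, (h i l * phi l j k + h j l * phi i l k + h k l * phi i j l)) = 0) :
    ∀ i j, h i j = 0 := by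
  have hzero : Matrix.of h = 0 :=
    i_map_injective_general lagrangeIdentity_phi phi_swap_right (by simp) (by simp)
      (Matrix.IsSymm.ext hsymm) hker
  exact fun i j ↦ congrFun₂ hzero i j
end

section
/- For all indices i,j,l ∈ {1,…,7} and every vector α ∈ ℝ⁷: Σ_{σ∈S₇} sgn(σ) α_{σ(1)} φ_{i l σ(2)} φ_{j σ(3) σ(4)} φ_{σ(5) σ(6) σ(7)} = 24 (δ_{lj} α_i − δ_{ij} α_l + Σ_k ψ_{iljk} α_k). (This is the coordinate form of the identity ∗((v⌐w⌐φ)∧(u⌐φ)∧φ) = 2 g(u,v) w♭ − 2 g(u,w) v♭ + 2 (u⌐v⌐w⌐ψ) for the standard G₂-structure.) -/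
open Finset

/-!
Since `ψ = ∗φ`, contracting the Levi-Civita symbol with the last factor `φ` turns the sum over
permutations into `6 ∑ α_a φ_{ilb} φ_{jcd} ψ_{abcd}`. The `G₂` identity
`∑ φ_{ijm} φ_{klm} = δ_{ik} δ_{jl} - δ_{il} δ_{jk} - ψ_{ijkl}` implies
`∑ φ_{jcd} ψ_{abcd} = -4 φ_{jab}`, which leaves `-24 ∑ α_a φ_{ilb} φ_{jab}`, and the same identity
evaluates this sum.

Both `∗φ = ψ` and the `G₂` identity compare totally antisymmetric arrays, which are determined by
their entries at strictly increasing indices.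
-/

section TupleSums

variable {n : ℕ} {ι M : Type*} [Fintype ι] [AddCommMonoid M]

theorem sum_pi_fin_zero (F : (Fin 0 → ι) → M) :
    ∑ v, F v = F ![] := by
  rw [Fintype.sum_unique, Subsingleton.elim default ![]]

theorem sum_pi_fin_succ (F : (Fin (n + 1) → ι) → M) :
    ∑ v, F v = ∑ a, ∑ w : Fin n → ι, F (Matrix.vecCons a w) := by
  rw [← Equiv.sum_comp (Fin.consEquiv fun _ ↦ ι), Fintype.sum_prod_type]
  rfl

end TupleSums

section Antisymmetric

variable {n p q : ℕ} {ι R : Type*} [CommRing R]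

/-- Total antisymmetry of an array with `n` indices in `ι`: permuting the indices multiplies the
entry by the sign of the permutation. -/
def TotallyAntisymm (f : (Fin n → ι) → R) : Prop :=
  ∀ (v : Fin n → ι) (σ : Equiv.Perm (Fin n)), f (v ∘ σ) = ((Equiv.Perm.sign σ : ℤ) : R) * f v

theorem totallyAntisymm_of_swap_castSucc_succ {f : (Fin (n + 1) → ι) → R}
    (hf : ∀ v (i : Fin n), f (v ∘ Equiv.swap i.castSucc i.succ) = -f v) : TotallyAntisymm f := by
  intro v σ
  have hσ : σ ∈ Submonoid.closure (Set.range fun i : Fin n ↦ Equiv.swap i.castSucc i.succ) := by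
    simp only [Equiv.Perm.mclosure_swap_castSucc_succ, Submonoid.mem_top]
  induction hσ using Submonoid.closure_induction_right with
  | one => simp
  | mul_right σ _ τ hτ ih =>
    obtain ⟨i, rfl⟩ := hτ
    rw [Equiv.Perm.coe_mul, ← Function.comp_assoc, hf, ih, Equiv.Perm.sign_mul,
      Equiv.Perm.sign_swap i.castSucc_lt_succ.ne]
    simp

theorem totallyAntisymm_sum_sign_mul (f : (Fin n → ι) → R) :
    TotallyAntisymm fun v ↦
      ∑ σ : Equiv.Perm (Fin n), ((Equiv.Perm.sign σ : ℤ) : R) * f (v ∘ σ) := by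
  intro v τ
  rw [Finset.mul_sum]
  refine Fintype.sum_equiv (Equiv.mulLeft τ) _ _ fun σ ↦ ?_
  have sign_eq : Equiv.Perm.sign σ = Equiv.Perm.sign τ * Equiv.Perm.sign (τ * σ) := by
    rw [Equiv.Perm.sign_mul, ← mul_assoc, Int.units_mul_self, one_mul]
  rw [sign_eq, Equiv.coe_mulLeft, Equiv.Perm.coe_mul, Function.comp_assoc]
  push_cast
  ring

theorem TotallyAntisymm.append_comp_comp {f : (Fin (p + q) → ι) → R} (hf : TotallyAntisymm f)
    (w : Fin p → ι) (u : Fin q → ι) (σ : Equiv.Perm (Fin p)) (τ : Equiv.Perm (Fin q)) :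
    f (Fin.append (w ∘ σ) (u ∘ τ)) =
      ((Equiv.Perm.sign σ : ℤ) : R) * ((Equiv.Perm.sign τ : ℤ) : R) * f (Fin.append w u) := by
  have append_comp : Fin.append (w ∘ σ) (u ∘ τ) =
      Fin.append w u ∘ finSumFinEquiv.permCongr (Equiv.Perm.sumCongr σ τ) := by
    ext i
    refine Fin.addCases (fun a ↦ ?_) (fun b ↦ ?_) i <;> simp [Equiv.permCongr_apply]
  rw [append_comp, hf, Equiv.Perm.sign_permCongr, Equiv.Perm.sign_sumCongr]
  push_cast
  ring

theorem TotallyAntisymm.append_left {f : (Fin (p + q) → ι) → R} (hf : TotallyAntisymm f)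
    (u : Fin q → ι) : TotallyAntisymm fun w : Fin p → ι ↦ f (Fin.append w u) := fun w σ ↦ by
  simpa using hf.append_comp_comp w u σ 1

theorem TotallyAntisymm.append_right {f : (Fin (p + q) → ι) → R} (hf : TotallyAntisymm f)
    (w : Fin p → ι) : TotallyAntisymm fun u : Fin q → ι ↦ f (Fin.append w u) := fun u τ ↦ by
  simpa using hf.append_comp_comp w u 1 τ

theorem TotallyAntisymm.sum_mul_sum_sign_mul [Fintype ι] {f : (Fin n → ι) → R}
    (hf : TotallyAntisymm f) (g : (Fin n → ι) → R) :
    ∑ v, f v * ∑ σ : Equiv.Perm (Fin n), ((Equiv.Perm.sign σ : ℤ) : R) * g (v ∘ σ) =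
      n.factorial * ∑ v, f v * g v := by
  have sum_comp (σ : Equiv.Perm (Fin n)) :
      ∑ v, f v * (((Equiv.Perm.sign σ : ℤ) : R) * g (v ∘ σ)) = ∑ v, f v * g v := by
    refine Fintype.sum_equiv (σ.symm.arrowCongr (Equiv.refl ι)) _ _ fun v ↦ ?_
    change _ = f (v ∘ σ) * g (v ∘ σ)
    rw [hf]
    ring
  simp_rw [Finset.mul_sum (s := Finset.univ (α := Equiv.Perm (Fin n)))]
  rw [Finset.sum_comm]
  simp only [sum_comp, Finset.sum_const, Finset.card_univ, Fintype.card_perm, Fintype.card_fin,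
    nsmul_eq_mul]

theorem TotallyAntisymm.eq_zero_of_not_injective [NoZeroDivisors R] [CharZero R]
    {f : (Fin n → ι) → R} (hf : TotallyAntisymm f) {v : Fin n → ι}
    (hv : ¬ Function.Injective v) : f v = 0 := by
  obtain ⟨i, j, hij, hne⟩ := Function.not_injective_iff.mp hv
  have v_comp_swap : v ∘ Equiv.swap i j = v := by
    ext k
    rw [Function.comp_apply, Equiv.apply_swap_eq_self hij]
  have f_eq_neg := hf v (Equiv.swap i j)
  rw [v_comp_swap, Equiv.Perm.sign_swap hne] at f_eq_neg
  exact self_eq_neg.mp (by simpa using f_eq_neg)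

theorem TotallyAntisymm.ext_strictMono [LinearOrder ι] [NoZeroDivisors R] [CharZero R]
    {f g : (Fin n → ι) → R} (hf : TotallyAntisymm f) (hg : TotallyAntisymm g)
    (hfg : ∀ v, StrictMono v → f v = g v) (v : Fin n → ι) : f v = g v := by
  by_cases hv : Function.Injective v
  · have sorted : StrictMono (v ∘ Tuple.sort v) :=
      (Tuple.monotone_sort v).strictMono_of_injective (hv.comp (Tuple.sort v).injective)
    have h := hfg _ sorted
    rw [hf, hg] at h
    exact mul_left_cancel₀ (Int.cast_ne_zero.mpr (Units.ne_zero _)) h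
  · rw [hf.eq_zero_of_not_injective hv, hg.eq_zero_of_not_injective hv]

theorem sum_sign_mul_eq_of_strictMono [LinearOrder ι] {f : (Fin n → ι) → R}
    (hf : ∀ v, ¬ StrictMono v → f v = 0) {v : Fin n → ι} (hv : StrictMono v) :
    ∑ σ : Equiv.Perm (Fin n), ((Equiv.Perm.sign σ : ℤ) : R) * f (v ∘ σ) = f v := by
  rw [Finset.sum_eq_single 1]
  · simp
  · intro σ _ hσ
    have hvσ : ¬ StrictMono (v ∘ σ) := fun h ↦ hσ <| Equiv.ext fun i ↦ by
      have hσ_mono : StrictMono σ := fun a b hab ↦ hv.lt_iff_lt.mp (h hab)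
      exact congrFun (StrictMono.range_inj hσ_mono strictMono_id |>.mp (by simp)) i
    rw [hf _ hvσ, mul_zero]
  · simp

end Antisymmetric

section LeviCivita

variable {n : ℕ} {R : Type*} [CommRing R]

/-- The Levi-Civita symbol `ε`: the sign of `v` if it is a permutation, and `0` otherwise. -/
def leviCivita (v : Fin n → Fin n) : ℤ :=
  ∏ i, ∏ j ∈ Finset.Ioi i, if v i < v j then 1 else if v j < v i then -1 else 0

theorem leviCivita_perm (σ : Equiv.Perm (Fin n)) : leviCivita σ = Equiv.Perm.sign σ := by
  rw [Equiv.Perm.sign_eq_prod_prod_Ioi]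
  push_cast
  refine Finset.prod_congr rfl fun i _ ↦ Finset.prod_congr rfl fun j hj ↦ ?_
  have hne : σ i ≠ σ j := σ.injective.ne (Finset.mem_Ioi.mp hj).ne
  rcases hne.lt_or_gt with hlt | hlt <;> simp [hlt, hlt.not_gt]

theorem leviCivita_eq_zero_of_not_injective {v : Fin n → Fin n} (hv : ¬ Function.Injective v) :
    leviCivita v = 0 := by
  obtain ⟨i, j, hij, hne⟩ := Function.not_injective_iff.mp hv
  wlog hlt : i < j generalizing i j
  · exact this j i hij.symm hne.symm (hne.symm.lt_of_le (not_lt.mp hlt))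
  refine Finset.prod_eq_zero (Finset.mem_univ i)
    (Finset.prod_eq_zero (Finset.mem_Ioi.mpr hlt) ?_)
  simp [hij]

theorem sum_sign_mul_eq_sum_leviCivita_mul (F : (Fin n → Fin n) → R) :
    ∑ σ : Equiv.Perm (Fin n), ((Equiv.Perm.sign σ : ℤ) : R) * F σ =
      ∑ v, (leviCivita v : R) * F v := by
  refine Fintype.sum_of_injective (fun σ : Equiv.Perm (Fin n) ↦ ⇑σ) DFunLike.coe_injective _ _
    (fun v hv ↦ ?_) fun σ ↦ by rw [leviCivita_perm]
  have hv_inj : ¬ Function.Injective v := fun h ↦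
    hv ⟨Equiv.ofBijective v (Finite.injective_iff_bijective.mp h), rfl⟩
  rw [leviCivita_eq_zero_of_not_injective hv_inj, Int.cast_zero, zero_mul]

theorem totallyAntisymm_leviCivita :
    TotallyAntisymm fun v : Fin n → Fin n ↦ (leviCivita v : R) := by
  intro v σ
  by_cases hv : Function.Injective v
  · obtain ⟨τ, rfl⟩ : ∃ τ : Equiv.Perm (Fin n), ⇑τ = v :=
      ⟨Equiv.ofBijective v (Finite.injective_iff_bijective.mp hv), rfl⟩
    beta_reduce
    rw [← Equiv.Perm.coe_mul, leviCivita_perm, leviCivita_perm, Equiv.Perm.sign_mul]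
    push_cast
    ring
  · have hvσ : ¬ Function.Injective (v ∘ σ) := by rwa [σ.injective_comp]
    simp [leviCivita_eq_zero_of_not_injective hv, leviCivita_eq_zero_of_not_injective hvσ]

end LeviCivita

section StandardG2

/-- Multiplication table of the imaginary octonions: the entry `±k` in row `i`, column `j` says
that `e_i × e_j = ±e_k`, with `k` counted from 1, and the entry `0` that the product vanishes. -/
def crossTable : Matrix (Fin 7) (Fin 7) ℤ :=
  !![ 0, -3,  2, -5,  4, -7,  6;
      3,  0, -1, -6,  7,  4, -5;
     -2,  1,  0,  7,  6, -5, -4;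
      5,  6, -7,  0, -1, -2,  3;
     -4, -7, -6,  1,  0,  3,  2;
      7, -4,  5,  2, -3,  0, -1;
     -6,  5,  4, -3, -2,  1,  0]

/-- The array `φ` with integer entries, read off `crossTable` through `φ_{ijk} = ⟨e_i × e_j, e_k⟩`
so that statements about it can be decided by evaluation. -/
def phiInt (i j k : Fin 7) : ℤ :=
  if crossTable i j = (k : ℕ) + 1 then 1 else if crossTable i j = -((k : ℕ) + 1) then -1 else 0

/-- The array `ψ` with integer entries. It is defined by solving the contraction identity
`∑ m, φ_{ijm} φ_{klm} = δ_{ik} δ_{jl} - δ_{il} δ_{jk} - ψ_{ijkl}` for `ψ`, so that this identity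
reduces to the agreement of two totally antisymmetric arrays on increasing indices. -/
def psiInt (i j k l : Fin 7) : ℤ :=
  (if i = k then 1 else 0) * (if j = l then 1 else 0)
    - (if i = l then 1 else 0) * (if j = k then 1 else 0) - ∑ m, phiInt i j m * phiInt k l m

theorem phiInt_swap_left : ∀ i j k, phiInt j i k = -phiInt i j k := by decide +kernel

theorem phiInt_swap_right : ∀ i j k, phiInt i k j = -phiInt i j k := by decide +kernel

theorem psiInt_swap_left (i j k l : Fin 7) : psiInt j i k l = -psiInt i j k l := by
  simp only [psiInt, phiInt_swap_left i j, neg_mul, Finset.sum_neg_distrib]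
  ring

theorem psiInt_swap_middle : ∀ i j k l, psiInt i k j l = -psiInt i j k l := by decide +kernel

theorem psiInt_swap_right (i j k l : Fin 7) : psiInt i j l k = -psiInt i j k l := by
  simp only [psiInt, phiInt_swap_left k l, mul_neg, Finset.sum_neg_distrib]
  ring

theorem phi0_eq_zero_of_not_strictMono {v : Fin 3 → Fin 7} (hv : ¬ StrictMono v) :
    phi0 (v 0) (v 1) (v 2) = 0 := by
  contrapose! hv
  simp only [phi0, Prod.mk.injEq] at hv
  rw [Fin.strictMono_iff_lt_succ, Fin.forall_fin_two]
  change v 0 < v 1 ∧ v 1 < v 2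
  split_ifs at hv with h <;> simp_all

theorem psi0_eq_zero_of_not_strictMono {v : Fin 4 → Fin 7} (hv : ¬ StrictMono v) :
    psi0 (v 0) (v 1) (v 2) (v 3) = 0 := by
  contrapose! hv
  simp only [psi0, Prod.mk.injEq] at hv
  rw [Fin.strictMono_iff_lt_succ, Fin.forall_fin_succ, Fin.forall_fin_two]
  change v 0 < v 1 ∧ v 1 < v 2 ∧ v 2 < v 3
  split_ifs at hv with h <;> simp_all

theorem phi0_eq_phiInt_of_lt {i j k : Fin 7} (hij : i < j) (hjk : j < k) :
    phi0 i j k = phiInt i j k := by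
  have phiInt_eq : ∀ i j k : Fin 7, i < j → j < k → phiInt i j k =
      if (i, j, k) ∈ ({(0, 1, 2), (0, 3, 4), (0, 5, 6), (1, 3, 5)} : Finset _) then -1
      else if (i, j, k) ∈ ({(1, 4, 6), (2, 3, 6), (2, 4, 5)} : Finset _) then 1
      else 0 := by decide +kernel
  simp only [phiInt_eq i j k hij hjk, phi0, Finset.mem_insert, Finset.mem_singleton]
  split_ifs <;> grind

theorem psi0_eq_psiInt_of_lt {i j k l : Fin 7} (hij : i < j) (hjk : j < k) (hkl : k < l) :
    psi0 i j k l = psiInt i j k l := by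
  have psiInt_eq : ∀ i j k l : Fin 7, i < j → j < k → k < l → psiInt i j k l =
      if (i, j, k, l) ∈ ({(0, 1, 3, 6), (0, 1, 4, 5), (0, 2, 3, 5)} : Finset _) then 1
      else if (i, j, k, l) ∈
        ({(0, 2, 4, 6), (1, 2, 3, 4), (1, 2, 5, 6), (3, 4, 5, 6)} : Finset _) then -1
      else 0 := by decide +kernel
  simp only [psiInt_eq i j k l hij hjk hkl, psi0, Finset.mem_insert, Finset.mem_singleton]
  split_ifs <;> grind

theorem phi_apply_eq_sum (v : Fin 3 → Fin 7) :
    phi (v 0) (v 1) (v 2) = ∑ σ : Equiv.Perm (Fin 3),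
      ((Equiv.Perm.sign σ : ℤ) : ℝ) * phi0 ((v ∘ σ) 0) ((v ∘ σ) 1) ((v ∘ σ) 2) := by
  rw [phi, show ![v 0, v 1, v 2] = v from FinVec.etaExpand_eq v]
  rfl

theorem psi_apply_eq_sum (v : Fin 4 → Fin 7) :
    psi (v 0) (v 1) (v 2) (v 3) = ∑ σ : Equiv.Perm (Fin 4), ((Equiv.Perm.sign σ : ℤ) : ℝ) *
      psi0 ((v ∘ σ) 0) ((v ∘ σ) 1) ((v ∘ σ) 2) ((v ∘ σ) 3) := by
  rw [psi, show ![v 0, v 1, v 2, v 3] = v from FinVec.etaExpand_eq v]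
  rfl

theorem totallyAntisymm_phi : TotallyAntisymm fun v : Fin 3 → Fin 7 ↦ phi (v 0) (v 1) (v 2) := by
  simpa only [phi_apply_eq_sum] using
    totallyAntisymm_sum_sign_mul fun v : Fin 3 → Fin 7 ↦ phi0 (v 0) (v 1) (v 2)

theorem totallyAntisymm_psi :
    TotallyAntisymm fun v : Fin 4 → Fin 7 ↦ psi (v 0) (v 1) (v 2) (v 3) := by
  simpa only [psi_apply_eq_sum] using
    totallyAntisymm_sum_sign_mul fun v : Fin 4 → Fin 7 ↦ psi0 (v 0) (v 1) (v 2) (v 3)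

theorem totallyAntisymm_phiInt :
    TotallyAntisymm fun v : Fin 3 → Fin 7 ↦ (phiInt (v 0) (v 1) (v 2) : ℝ) := by
  refine totallyAntisymm_of_swap_castSucc_succ fun v i ↦ ?_
  fin_cases i
  · exact_mod_cast phiInt_swap_left (v 0) (v 1) (v 2)
  · exact_mod_cast phiInt_swap_right (v 0) (v 1) (v 2)

theorem totallyAntisymm_psiInt :
    TotallyAntisymm fun v : Fin 4 → Fin 7 ↦ (psiInt (v 0) (v 1) (v 2) (v 3) : ℝ) := by
  refine totallyAntisymm_of_swap_castSucc_succ fun v i ↦ ?_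
  fin_cases i
  · exact_mod_cast psiInt_swap_left (v 0) (v 1) (v 2) (v 3)
  · exact_mod_cast psiInt_swap_middle (v 0) (v 1) (v 2) (v 3)
  · exact_mod_cast psiInt_swap_right (v 0) (v 1) (v 2) (v 3)

theorem phi_eq_phiInt (i j k : Fin 7) : phi i j k = phiInt i j k := by
  refine totallyAntisymm_phi.ext_strictMono totallyAntisymm_phiInt (fun v hv ↦ ?_) ![i, j, k]
  rw [phi_apply_eq_sum, sum_sign_mul_eq_of_strictMono
    (f := fun v : Fin 3 → Fin 7 ↦ phi0 (v 0) (v 1) (v 2))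
    (fun _ ↦ phi0_eq_zero_of_not_strictMono) hv]
  exact phi0_eq_phiInt_of_lt (hv (by decide)) (hv (by decide))

theorem psi_eq_psiInt (i j k l : Fin 7) : psi i j k l = psiInt i j k l := by
  refine totallyAntisymm_psi.ext_strictMono totallyAntisymm_psiInt (fun v hv ↦ ?_) ![i, j, k, l]
  rw [psi_apply_eq_sum, sum_sign_mul_eq_of_strictMono
    (f := fun v : Fin 4 → Fin 7 ↦ psi0 (v 0) (v 1) (v 2) (v 3))
    (fun _ ↦ psi0_eq_zero_of_not_strictMono) hv]
  exact psi0_eq_psiInt_of_lt (hv (by decide)) (hv (by decide)) (hv (by decide))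

theorem phi_swap_left (i j k : Fin 7) : phi j i k = -phi i j k := by
  simp only [phi_eq_phiInt, phiInt_swap_left i j k, Int.cast_neg]

theorem phi_rotate (i j k : Fin 7) : phi j k i = phi i j k := by
  rw [phi_swap_right, phi_swap_left, neg_neg]

theorem sum_phi_mul_phi (i j k l : Fin 7) :
    ∑ m, phi i j m * phi k l m =
      kdelta i k * kdelta j l - kdelta i l * kdelta j k - psi i j k l := by
  simp only [phi_eq_phiInt, psi_eq_psiInt, psiInt, kdelta]
  push_cast
  ring

theorem kdelta_self (i : Fin 7) : kdelta i i = 1 := if_pos rfl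

theorem sum_kdelta_mul (i : Fin 7) (f : Fin 7 → ℝ) : ∑ a, kdelta i a * f a = f i := by
  simp [kdelta]

theorem sum_sum_phi_mul_phi (i k : Fin 7) :
    ∑ j, ∑ m, phi i j m * phi k j m = 6 * kdelta i k := by
  have psi_eq_zero (j : Fin 7) : psi i j k j = 0 :=
    totallyAntisymm_psi.eq_zero_of_not_injective (v := ![i, j, k, j])
      fun h ↦ absurd (@h 1 3 rfl) (by decide)
  simp only [sum_phi_mul_phi, psi_eq_zero, sub_zero, Finset.sum_sub_distrib, kdelta_self, mul_one,
    sum_kdelta_mul, Finset.sum_const, Finset.card_univ, Fintype.card_fin]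
  ring

theorem sum_phi_mul_psi (i a b : Fin 7) :
    ∑ c, ∑ d, phi i c d * psi a b c d = -4 * phi i a b := by
  have psi_eq (c d : Fin 7) : psi a b c d =
      kdelta a c * kdelta b d - kdelta b c * kdelta a d - ∑ m, phi a b m * phi c d m := by
    rw [sum_phi_mul_phi]
    ring
  have sum_phi_mul_kdelta (a b : Fin 7) :
      ∑ c, ∑ d, phi i c d * (kdelta a c * kdelta b d) = phi i a b := by
    simp [kdelta]
  have sum_phi_mul_sum : ∑ c, ∑ d, phi i c d * ∑ m, phi a b m * phi c d m = 6 * phi i a b :=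
    calc ∑ c, ∑ d, phi i c d * ∑ m, phi a b m * phi c d m
        = ∑ c, ∑ d, ∑ m, phi a b m * (phi i c d * phi m c d) := by
          simp only [Finset.mul_sum, mul_left_comm (phi i _ _)]
          refine Fintype.sum_congr _ _ fun c ↦ Fintype.sum_congr _ _ fun d ↦
            Fintype.sum_congr _ _ fun m ↦ ?_
          rw [phi_rotate m c d]
      _ = ∑ m, phi a b m * ∑ c, ∑ d, phi i c d * phi m c d := by
          simp only [Finset.mul_sum]
          exact Finset.sum_comm_cycle
      _ = 6 * phi a b i := by
          simp only [sum_sum_phi_mul_phi, mul_left_comm _ (6 : ℝ), ← Finset.mul_sum,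
            mul_comm (phi a b _), sum_kdelta_mul]
      _ = 6 * phi i a b := by rw [phi_rotate]
  simp only [psi_eq, mul_sub, Finset.sum_sub_distrib, sum_phi_mul_kdelta, sum_phi_mul_sum,
    phi_swap_right i a b]
  ring

theorem psiInt_eq_sum_leviCivita_of_lt : ∀ a b c d : Fin 7, a < b → b < c → c < d →
    psiInt a b c d =
      -leviCivita (Fin.append ![a, b, c, d] ![0, 1, 2])
        - leviCivita (Fin.append ![a, b, c, d] ![0, 3, 4])
        - leviCivita (Fin.append ![a, b, c, d] ![0, 5, 6])
        - leviCivita (Fin.append ![a, b, c, d] ![1, 3, 5])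
        + leviCivita (Fin.append ![a, b, c, d] ![1, 4, 6])
        + leviCivita (Fin.append ![a, b, c, d] ![2, 3, 6])
        + leviCivita (Fin.append ![a, b, c, d] ![2, 4, 5]) := by
  decide +kernel

theorem sum_mul_phi0 (f : (Fin 3 → Fin 7) → ℝ) :
    ∑ u, f u * phi0 (u 0) (u 1) (u 2) =
      -f ![0, 1, 2] - f ![0, 3, 4] - f ![0, 5, 6] - f ![1, 3, 5]
        + f ![1, 4, 6] + f ![2, 3, 6] + f ![2, 4, 5] := by
  rw [← Finset.sum_subset (Finset.subset_univ {![0, 1, 2], ![0, 3, 4], ![0, 5, 6], ![1, 3, 5],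
    ![1, 4, 6], ![2, 3, 6], ![2, 4, 5]})]
  · simp [phi0, sub_eq_add_neg, add_assoc]
  · intro u _ hu
    have eq_vec (a b c : Fin 7) : (u 0, u 1, u 2) = (a, b, c) ↔ u = ![a, b, c] := by
      simp [funext_iff, Fin.forall_fin_succ]
    simp_all [phi0]

theorem sum_leviCivita_append_mul_phi (w : Fin 4 → Fin 7) :
    ∑ u : Fin 3 → Fin 7, (leviCivita (Fin.append w u) : ℝ) * phi (u 0) (u 1) (u 2) =
      6 * psi (w 0) (w 1) (w 2) (w 3) := by
  have antisymm_left : TotallyAntisymm fun w : Fin 4 → Fin 7 ↦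
      ∑ u : Fin 3 → Fin 7, (leviCivita (Fin.append w u) : ℝ) * phi (u 0) (u 1) (u 2) := by
    intro w σ
    have h := fun u : Fin 3 → Fin 7 ↦ totallyAntisymm_leviCivita (R := ℝ).append_left u w σ
    simp only [h, mul_assoc, Finset.mul_sum]
  have antisymm_right : TotallyAntisymm fun w : Fin 4 → Fin 7 ↦
      6 * psi (w 0) (w 1) (w 2) (w 3) := by
    intro w σ
    have h := totallyAntisymm_psi w σ
    simp only [h, mul_left_comm]
  refine antisymm_left.ext_strictMono antisymm_right (fun w hw ↦ ?_) w
  simp only [phi_apply_eq_sum]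
  rw [(totallyAntisymm_leviCivita.append_right w).sum_mul_sum_sign_mul
    fun u : Fin 3 → Fin 7 ↦ phi0 (u 0) (u 1) (u 2), sum_mul_phi0, psi_eq_psiInt,
    psiInt_eq_sum_leviCivita_of_lt _ _ _ _ (hw (by decide)) (hw (by decide)) (hw (by decide)),
    show ![w 0, w 1, w 2, w 3] = w from FinVec.etaExpand_eq w]
  push_cast
  rfl

theorem sum_sign_mul_phi (F : Fin 7 → Fin 7 → Fin 7 → Fin 7 → ℝ) :
    ∑ σ : Equiv.Perm (Fin 7), ((Equiv.Perm.sign σ : ℤ) : ℝ) *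
        (F (σ 0) (σ 1) (σ 2) (σ 3) * phi (σ 4) (σ 5) (σ 6)) =
      6 * ∑ a, ∑ b, ∑ c, ∑ d, F a b c d * psi a b c d :=
  calc ∑ σ : Equiv.Perm (Fin 7), ((Equiv.Perm.sign σ : ℤ) : ℝ) *
        (F (σ 0) (σ 1) (σ 2) (σ 3) * phi (σ 4) (σ 5) (σ 6))
      = ∑ v : Fin (4 + 3) → Fin 7, (leviCivita v : ℝ) *
          (F (v 0) (v 1) (v 2) (v 3) * phi (v 4) (v 5) (v 6)) :=
        sum_sign_mul_eq_sum_leviCivita_mul fun v : Fin 7 → Fin 7 ↦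
          F (v 0) (v 1) (v 2) (v 3) * phi (v 4) (v 5) (v 6)
    _ = ∑ w : Fin 4 → Fin 7, F (w 0) (w 1) (w 2) (w 3) *
          ∑ u : Fin 3 → Fin 7, (leviCivita (Fin.append w u) : ℝ) * phi (u 0) (u 1) (u 2) := by
        rw [← Equiv.sum_comp (Fin.appendEquiv 4 3), Fintype.sum_prod_type]
        simp only [Finset.mul_sum, mul_left_comm (F _ _ _ _)]
        rfl
    _ = 6 * ∑ a, ∑ b, ∑ c, ∑ d, F a b c d * psi a b c d := by
        simp_rw [sum_leviCivita_append_mul_phi, mul_left_comm _ (6 : ℝ), ← Finset.mul_sum,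
          sum_pi_fin_succ, sum_pi_fin_zero]
        rfl

theorem sum_sign_mul_phi_mul_phi (B : Fin 7 → Fin 7 → ℝ) (j : Fin 7) :
    ∑ σ : Equiv.Perm (Fin 7), ((Equiv.Perm.sign σ : ℤ) : ℝ) *
        (B (σ 0) (σ 1) * phi j (σ 2) (σ 3) * phi (σ 4) (σ 5) (σ 6)) =
      -24 * ∑ a, ∑ b, B a b * phi j a b := by
  rw [sum_sign_mul_phi fun a b c d ↦ B a b * phi j c d]
  simp only [mul_assoc, ← Finset.mul_sum, sum_phi_mul_psi, mul_left_comm _ (-4 : ℝ)]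
  ring

end StandardG2

/-- Equation `wtwscubedcoreq` (coordinate form of Corollary `wtwscubedcor`) for the
standard G₂-structure on ℝ⁷. -/
theorem wtws_cubed_cor (i j l : Fin 7) (α : Fin 7 → ℝ) :
    ∑ σ : Equiv.Perm (Fin 7),
      ((Equiv.Perm.sign σ : ℤ) : ℝ) *
        (α (σ 0) * phi i l (σ 1) * phi j (σ 2) (σ 3) * phi (σ 4) (σ 5) (σ 6))
      = 24 * (kdelta l j * α i - kdelta i j * α l + ∑ k, psi i l j k * α k) := by
  calc
    _ = -24 * ∑ a, (∑ b, phi i l b * phi j a b) * α a := by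
      rw [sum_sign_mul_phi_mul_phi (fun a b ↦ α a * phi i l b) j]
      simp only [mul_assoc, mul_comm _ (α _), Finset.mul_sum]
    _ = -24 * (kdelta i j * α l - kdelta l j * α i - ∑ k, psi i l j k * α k) := by
      simp only [sum_phi_mul_phi, sub_mul, mul_assoc, Finset.sum_sub_distrib, ← Finset.mul_sum,
        sum_kdelta_mul]
    _ = 24 * (kdelta l j * α i - kdelta i j * α l + ∑ k, psi i l j k * α k) := by ring
end
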